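/- Let Y be a real-valued random variable on a probability space with E|Y| < ∞, let F(s) = P(Y ≤ s) be its cumulative distribution function, and let u ∈ (0,1). Then for all a, b ∈ ℝ, E[ρ_u(Y − b)] − E[ρ_u(Y − a)] = ∫_a^b (F(s) − u) ds, where both expectations are finite because |ρ_u(x)| ≤ |x|. -/

import Mathlib

open MeasureTheory intervalIntegral

/-- The check (quantile loss) function at level `u`:
`ρ_u(x) = x * (u - 1{x < 0})`. -/
noncomputable def checkFun (u x : ℝ) : ℝ := x * (u - if x < 0 then 1 else 0)

/-!
As a function of `s`, the loss `ρ_u(y - s)` is `max s y` plus an affine function of slope `-u`, and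
`max s y` has right derivative `1{y ≤ s}` at every `s`. Hence `max b y - max a y` is the integral of
`1{y ≤ s}` over `[a, b]`; integrating over `y = Y ω` and exchanging the two integrals turns
the indicator into `P(Y ≤ s)`.
-/

theorem checkFun_sub_eq_max (u y s : ℝ) :
    checkFun u (y - s) = max s y - (1 - u) * y - u * s := by
  unfold checkFun
  split_ifs with h
  · rw [max_eq_left (by linarith)]; ring
  · rw [max_eq_right (by linarith)]; ring

theorem hasDerivWithinAt_max_const_Ioi (y s : ℝ) :
    HasDerivWithinAt (fun t => max t y) ((Set.Ici y).indicator 1 s) (Set.Ioi s) s := by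
  rcases le_or_gt y s with hys | hsy
  · rw [Set.indicator_of_mem (Set.mem_Ici.2 hys)]
    exact (hasDerivWithinAt_id s _).congr
      (fun t hst => max_eq_left (hys.trans (Set.mem_Ioi.1 hst).le)) (max_eq_left hys)
  · rw [Set.indicator_of_notMem (Set.notMem_Ici.2 hsy)]
    refine ((hasDerivAt_const s y).congr_of_eventuallyEq ?_).hasDerivWithinAt
    filter_upwards [eventually_lt_nhds hsy] with t hty using max_eq_right hty.le

theorem intervalIntegral_indicator_Ici_one (y a b : ℝ) :
    ∫ s in a..b, (Set.Ici y).indicator (1 : ℝ → ℝ) s = max b y - max a y := by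
  have hint : IntervalIntegrable ((Set.Ici y).indicator (1 : ℝ → ℝ)) volume a b :=
    intervalIntegrable_iff.2 <|
      (intervalIntegrable_iff.1 intervalIntegrable_const).indicator measurableSet_Ici
  exact integral_eq_sub_of_hasDeriv_right (by fun_prop)
    (fun s _ => hasDerivWithinAt_max_const_Ioi y s) hint

section FiniteMeasure

variable {Ω : Type*} [MeasurableSpace Ω] {μ : Measure Ω} [IsFiniteMeasure μ] {Y : Ω → ℝ}

theorem integrable_checkFun_sub (hY : Integrable Y μ) (u s : ℝ) :
    Integrable (fun ω => checkFun u (Y ω - s)) μ := by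
  simp only [checkFun_sub_eq_max]
  exact (((integrable_const s).sup hY).sub (hY.const_mul (1 - u))).sub (integrable_const (u * s))

variable (μ Y) in
theorem intervalIntegrable_measureReal_le (a b : ℝ) :
    IntervalIntegrable (fun s : ℝ => μ.real {ω | Y ω ≤ s}) volume a b :=
  Monotone.intervalIntegrable fun _ _ hst => measureReal_mono fun _ hω => le_trans hω hst

theorem integrable_indicator_le_prod (hY : AEMeasurable Y μ) (ν : Measure ℝ) [IsFiniteMeasure ν] :
    Integrable ({p : ℝ × Ω | Y p.2 ≤ p.1}.indicator (1 : ℝ × Ω → ℝ)) (ν.prod μ) :=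
  (integrable_const 1).indicator₀ (nullMeasurableSet_le hY.comp_snd measurable_fst.aemeasurable)

theorem integral_max_sub_max (hY : AEMeasurable Y μ) (a b : ℝ) :
    ∫ ω, (max b (Y ω) - max a (Y ω)) ∂μ = ∫ s in a..b, μ.real {ω | Y ω ≤ s} := by
  have hfinite : IsFiniteMeasure (volume.restrict (Set.uIoc a b)) :=
    isFiniteMeasure_restrict.2 measure_Ioc_lt_top.ne
  calc ∫ ω, (max b (Y ω) - max a (Y ω)) ∂μ
      = ∫ ω, (∫ s in a..b, (Set.Ici (Y ω)).indicator (1 : ℝ → ℝ) s) ∂μ := by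
        simp only [intervalIntegral_indicator_Ici_one]
    _ = ∫ s in a..b, ∫ ω, {ω | Y ω ≤ s}.indicator (1 : Ω → ℝ) ω ∂μ :=
        (intervalIntegral_integral_swap
          (f := fun s => {ω | Y ω ≤ s}.indicator 1) (integrable_indicator_le_prod hY _)).symm
    _ = ∫ s in a..b, μ.real {ω | Y ω ≤ s} := by
        congr with s
        rw [integral_indicator₀ (nullMeasurableSet_le hY aemeasurable_const)]
        exact setIntegral_one_eq_measureReal

end FiniteMeasure

theorem expected_checkLoss_difference_general
    {Ω : Type*} [MeasurableSpace Ω] (μ : Measure Ω) [IsFiniteMeasure μ]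
    (Y : Ω → ℝ) (hY : Integrable Y μ)
    (F : ℝ → ℝ) (hF : ∀ s : ℝ, F s = μ.real {ω | Y ω ≤ s}) (u a b : ℝ) :
    (∫ ω, checkFun u (Y ω - b) ∂μ) - (∫ ω, checkFun u (Y ω - a) ∂μ) =
      ∫ s in a..b, (F s - u * μ.real Set.univ) := by
  have hmax (s : ℝ) : Integrable (fun ω => max s (Y ω)) μ := (integrable_const s).sup hY
  calc (∫ ω, checkFun u (Y ω - b) ∂μ) - ∫ ω, checkFun u (Y ω - a) ∂μ
      = ∫ ω, (checkFun u (Y ω - b) - checkFun u (Y ω - a)) ∂μ :=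
        (integral_sub (integrable_checkFun_sub hY u b) (integrable_checkFun_sub hY u a)).symm
    _ = ∫ ω, ((max b (Y ω) - max a (Y ω)) - u * (b - a)) ∂μ := by
        congr with ω
        rw [checkFun_sub_eq_max, checkFun_sub_eq_max]
        ring
    _ = (∫ ω, (max b (Y ω) - max a (Y ω)) ∂μ) - ∫ _, u * (b - a) ∂μ :=
        integral_sub ((hmax b).sub (hmax a)) (integrable_const _)
    _ = (∫ s in a..b, μ.real {ω | Y ω ≤ s}) - ∫ _ in a..b, u * μ.real Set.univ := by
        rw [integral_max_sub_max hY.aemeasurable, MeasureTheory.integral_const,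
          intervalIntegral.integral_const, smul_eq_mul, smul_eq_mul]
        ring
    _ = ∫ s in a..b, (F s - u * μ.real Set.univ) := by
        simp only [hF]
        exact (intervalIntegral.integral_sub (intervalIntegrable_measureReal_le μ Y a b)
          intervalIntegrable_const).symm

/-- Let `Y` be an integrable real random variable on a probability space, let
`F s = P(Y ≤ s)` be its cumulative distribution function, and let `u ∈ (0,1)`.
Then for all `a, b ∈ ℝ`,
`E[ρ_u(Y - b)] - E[ρ_u(Y - a)] = ∫_a^b (F(s) - u) ds`. -/
theorem expected_checkLoss_difference
    {Ω : Type*} [MeasurableSpace Ω] (μ : Measure Ω) [IsProbabilityMeasure μ]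
    (Y : Ω → ℝ) (hY : Integrable Y μ)
    (F : ℝ → ℝ) (hF : ∀ s : ℝ, F s = (μ {ω | Y ω ≤ s}).toReal)
    (u : ℝ) (hu : u ∈ Set.Ioo (0 : ℝ) 1) (a b : ℝ) :
    (∫ ω, checkFun u (Y ω - b) ∂μ) - (∫ ω, checkFun u (Y ω - a) ∂μ) =
      ∫ s in a..b, (F s - u) := by
  simpa using expected_checkLoss_difference_general μ Y hY F hF u a b
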